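/- Every term of the name algebra has exactly one normal form: for every term t there exists a unique term n such that t →* n and n is in normal form. -/

import Mathlib

/-- Terms of the name algebra over atoms in ℕ. -/
inductive Term : Type
  | var : ℕ → Term
  | projL : Term → Term
  | projR : Term → Term
  | join : Term → Term → Term
deriving DecidableEq

/-- One-step rewrite relation: the three rules `(u ∧ v).l → u`, `(u ∧ v).r → v`,
`(u.l ∧ u.r) → u`, closed under all term contexts. -/
inductive Step : Term → Term → Prop
  | splitL (u v : Term) : Step (Term.projL (Term.join u v)) u
  | splitR (u v : Term) : Step (Term.projR (Term.join u v)) v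
  | merge (u : Term) : Step (Term.join (Term.projL u) (Term.projR u)) u
  | congL {a b : Term} : Step a b → Step (Term.projL a) (Term.projL b)
  | congR {a b : Term} : Step a b → Step (Term.projR a) (Term.projR b)
  | congJoinL {a b : Term} (v : Term) : Step a b → Step (Term.join a v) (Term.join b v)
  | congJoinR {a b : Term} (u : Term) : Step a b → Step (Term.join u a) (Term.join u b)

/-- Reflexive-transitive closure of `Step`. -/
def Steps : Term → Term → Prop := Relation.ReflTransGen Step

/-- A term is in normal form if no rewrite step applies to it. -/
def NormalForm (n : Term) : Prop := ¬ ∃ m, Step n m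

/-- `u ≈ v` : the normal forms of `u` and `v` coincide, i.e. they reach a common normal form. -/
def TermEquiv (u v : Term) : Prop := ∃ n, NormalForm n ∧ Steps u n ∧ Steps v n

/-!
Normal forms are computed bottom-up by constructors that contract the redex at the root, if there
is one. On normal forms these constructors satisfy the three rewrite rules as equations, so
evaluating a term with them gives an invariant of rewriting. As this evaluation is itself a sequence
of rewrite steps, it fixes every normal form, and hence every normal form of a term is its value.
-/

theorem NormalForm.eq_of_steps {n m : Term} (hn : NormalForm n) (h : Steps n m) : n = m := by
  rcases h.cases_head with heq | ⟨k, hstep, -⟩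
  · exact heq
  · exact absurd ⟨k, hstep⟩ hn

namespace Term

theorem normalForm_var (i : ℕ) : NormalForm (var i) := by
  rintro ⟨_, ⟨⟩⟩

theorem normalForm_projL_iff {a : Term} :
    NormalForm (projL a) ↔ NormalForm a ∧ ∀ u v, a ≠ join u v := by
  constructor
  · intro h
    refine ⟨fun ⟨_, hstep⟩ => h ⟨_, .congL hstep⟩, ?_⟩
    rintro u v rfl
    exact h ⟨_, .splitL u v⟩
  · rintro ⟨ha, hne⟩ ⟨_, hstep⟩
    cases hstep with
    | splitL u v => exact hne _ _ rfl
    | congL hstep => exact ha ⟨_, hstep⟩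

theorem normalForm_projR_iff {a : Term} :
    NormalForm (projR a) ↔ NormalForm a ∧ ∀ u v, a ≠ join u v := by
  constructor
  · intro h
    refine ⟨fun ⟨_, hstep⟩ => h ⟨_, .congR hstep⟩, ?_⟩
    rintro u v rfl
    exact h ⟨_, .splitR u v⟩
  · rintro ⟨ha, hne⟩ ⟨_, hstep⟩
    cases hstep with
    | splitR u v => exact hne _ _ rfl
    | congR hstep => exact ha ⟨_, hstep⟩

theorem normalForm_join_iff {a b : Term} :
    NormalForm (join a b) ↔
      NormalForm a ∧ NormalForm b ∧ ∀ u, ¬(a = projL u ∧ b = projR u) := by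
  constructor
  · intro h
    refine ⟨fun ⟨_, hstep⟩ => h ⟨_, .congJoinL _ hstep⟩,
      fun ⟨_, hstep⟩ => h ⟨_, .congJoinR _ hstep⟩, ?_⟩
    rintro u ⟨rfl, rfl⟩
    exact h ⟨_, .merge u⟩
  · rintro ⟨ha, hb, hne⟩ ⟨_, hstep⟩
    cases hstep with
    | merge u => exact hne _ ⟨rfl, rfl⟩
    | congJoinL _ hstep => exact ha ⟨_, hstep⟩
    | congJoinR _ hstep => exact hb ⟨_, hstep⟩

/-- The left projection as an operation on normal forms: `projL` followed by contraction of the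
redex this may create at the root. -/
def left : Term → Term
  | join u _ => u
  | t => projL t

/-- The right projection as an operation on normal forms: `projR` followed by contraction of the
redex this may create at the root. -/
def right : Term → Term
  | join _ v => v
  | t => projR t

/-- Pairing as an operation on normal forms: `join` followed by contraction of the redex this may
create at the root. -/
def pair : Term → Term → Term
  | projL u, projR v => if u = v then u else join (projL u) (projR v)
  | a, b => join a b

theorem left_of_ne_join {a : Term} (h : ∀ u v, a ≠ join u v) : left a = projL a := by
  cases a with
  | join u v => exact absurd rfl (h u v)
  | _ => rfl

theorem right_of_ne_join {a : Term} (h : ∀ u v, a ≠ join u v) : right a = projR a := by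
  cases a with
  | join u v => exact absurd rfl (h u v)
  | _ => rfl

theorem pair_projL_projR (u : Term) : pair (projL u) (projR u) = u :=
  if_pos rfl

theorem pair_of_not_projections {a b : Term} (h : ∀ u, ¬(a = projL u ∧ b = projR u)) :
    pair a b = join a b := by
  unfold pair
  split
  · rw [if_neg]
    rintro rfl
    exact h _ ⟨rfl, rfl⟩
  · rfl

section NormalForms

variable {a b : Term}

theorem normalForm_left (ha : NormalForm a) : NormalForm (left a) := by
  by_cases hjoin : ∃ u v, a = join u v
  · obtain ⟨u, v, rfl⟩ := hjoin
    exact (normalForm_join_iff.mp ha).1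
  · push Not at hjoin
    rw [left_of_ne_join hjoin]
    exact normalForm_projL_iff.mpr ⟨ha, hjoin⟩

theorem normalForm_right (ha : NormalForm a) : NormalForm (right a) := by
  by_cases hjoin : ∃ u v, a = join u v
  · obtain ⟨u, v, rfl⟩ := hjoin
    exact (normalForm_join_iff.mp ha).2.1
  · push Not at hjoin
    rw [right_of_ne_join hjoin]
    exact normalForm_projR_iff.mpr ⟨ha, hjoin⟩

theorem normalForm_pair (ha : NormalForm a) (hb : NormalForm b) : NormalForm (pair a b) := by
  by_cases hproj : ∃ u, a = projL u ∧ b = projR u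
  · obtain ⟨u, rfl, rfl⟩ := hproj
    rw [pair_projL_projR]
    exact (normalForm_projL_iff.mp ha).1
  · rw [not_exists] at hproj
    rw [pair_of_not_projections hproj]
    exact normalForm_join_iff.mpr ⟨ha, hb, hproj⟩

theorem left_pair (ha : NormalForm a) (b : Term) : left (pair a b) = a := by
  by_cases hproj : ∃ u, a = projL u ∧ b = projR u
  · obtain ⟨u, rfl, rfl⟩ := hproj
    rw [pair_projL_projR]
    exact left_of_ne_join (normalForm_projL_iff.mp ha).2
  · rw [pair_of_not_projections (not_exists.mp hproj), left]

theorem right_pair (a : Term) (hb : NormalForm b) : right (pair a b) = b := by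
  by_cases hproj : ∃ u, a = projL u ∧ b = projR u
  · obtain ⟨u, rfl, rfl⟩ := hproj
    rw [pair_projL_projR]
    exact right_of_ne_join (normalForm_projR_iff.mp hb).2
  · rw [pair_of_not_projections (not_exists.mp hproj), right]

theorem pair_left_right (ha : NormalForm a) : pair (left a) (right a) = a := by
  by_cases hjoin : ∃ u v, a = join u v
  · obtain ⟨u, v, rfl⟩ := hjoin
    exact pair_of_not_projections (normalForm_join_iff.mp ha).2.2
  · push Not at hjoin
    rw [left_of_ne_join hjoin, right_of_ne_join hjoin, pair_projL_projR]

end NormalForms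

section Steps

variable {a a' b b' : Term}

theorem steps_projL (h : Steps a a') : Steps (projL a) (projL a') :=
  h.lift projL fun _ _ => .congL

theorem steps_projR (h : Steps a a') : Steps (projR a) (projR a') :=
  h.lift projR fun _ _ => .congR

theorem steps_join (ha : Steps a a') (hb : Steps b b') : Steps (join a b) (join a' b') :=
  (ha.lift (join · b) fun _ _ => .congJoinL b).trans (hb.lift (join a') fun _ _ => .congJoinR a')

theorem steps_projL_left (a : Term) : Steps (projL a) (left a) := by
  cases a with
  | join u v => exact .single (.splitL u v)
  | _ => exact .refl

theorem steps_projR_right (a : Term) : Steps (projR a) (right a) := by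
  cases a with
  | join u v => exact .single (.splitR u v)
  | _ => exact .refl

theorem steps_join_pair (a b : Term) : Steps (join a b) (pair a b) := by
  by_cases hproj : ∃ u, a = projL u ∧ b = projR u
  · obtain ⟨u, rfl, rfl⟩ := hproj
    rw [pair_projL_projR]
    exact .single (.merge u)
  · rw [pair_of_not_projections (not_exists.mp hproj)]
    exact .refl

end Steps

/-- The normal form of a term, obtained by evaluating the term bottom-up with `left`, `right` and
`pair`. -/
def normalize : Term → Term
  | var i => var i
  | projL a => left (normalize a)
  | projR a => right (normalize a)
  | join a b => pair (normalize a) (normalize b)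

theorem normalForm_normalize (t : Term) : NormalForm (normalize t) := by
  induction t with
  | var i => exact normalForm_var i
  | projL a ih => exact normalForm_left ih
  | projR a ih => exact normalForm_right ih
  | join a b iha ihb => exact normalForm_pair iha ihb

theorem steps_normalize (t : Term) : Steps t (normalize t) := by
  induction t with
  | var i => exact .refl
  | projL a ih => exact (steps_projL ih).trans (steps_projL_left _)
  | projR a ih => exact (steps_projR ih).trans (steps_projR_right _)
  | join a b iha ihb => exact (steps_join iha ihb).trans (steps_join_pair _ _)

theorem normalize_eq_of_step {s t : Term} (h : Step s t) : normalize s = normalize t := by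
  induction h with
  | splitL u v => exact left_pair (normalForm_normalize u) _
  | splitR u v => exact right_pair _ (normalForm_normalize v)
  | merge u => exact pair_left_right (normalForm_normalize u)
  | congL _ ih | congR _ ih | congJoinL _ _ ih | congJoinR _ _ ih => simp only [normalize, ih]

theorem normalize_eq_of_steps {s t : Term} (h : Steps s t) : normalize s = normalize t := by
  induction h with
  | refl => rfl
  | tail _ hstep ih => exact ih.trans (normalize_eq_of_step hstep)

end Term

/-- Every term of the name algebra has exactly one normal form. -/
theorem unique_normal_form :
    ∀ t : Term, ∃! n : Term, Steps t n ∧ NormalForm n := by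
  intro t
  refine ⟨t.normalize, ⟨t.steps_normalize, t.normalForm_normalize⟩, ?_⟩
  rintro n ⟨hsteps, hn⟩
  calc
    n = n.normalize := hn.eq_of_steps n.steps_normalize
    _ = t.normalize := (Term.normalize_eq_of_steps hsteps).symm
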